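/- arXiv:2512.19324 — 6 statements merged into one kernel-verified Lean document; each statement's English description precedes it below -/
import Mathlib

section
/- Let q be a prime power, n a positive integer, and f = Σ_{i=0}^{n−1} a_i X^{q^i} a q-polynomial with coefficients a_0, …, a_{n−1} ∈ F_{q^n}. Let D_f be the n×n matrix over F_{q^n} whose (i, j) entry (indices 0 ≤ i, j ≤ n−1) is a_{(j−i) mod n}^{q^i}. Then the rank of the F_q-linear map x ↦ f(x) on F_{q^n} equals the rank of the matrix D_f over F_{q^n}. -/
/-!
Fix an embedding of `F = F_q` into `K = F_{q^n}`, an `F`-basis `b` of `K`, and let `M` be the matrix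
of `f` in this basis. The Moore matrix `W = (b_k^{q^i})_{i,k}` satisfies `W M = D_f W`: both
`(i, j)` entries equal `f(b_j)^{q^i}`, the left one because the `q^i`-power map is `F`-linear, the
right one by expanding `f` and using `x^{q^n} = x` to reduce exponents modulo `n`
(`card_range_eq_pow_dickson_rank`). Since the powers of the Frobenius below `n` are distinct
automorphisms, Dedekind's independence of characters makes `W` invertible (`moore_det_ne_zero`), so
`D_f` is similar over `K` to `M`. The rank of `M` does not change under the field extension
(`rank_map_field`), and over `F` it is the dimension of the image of `f`.
-/

/-- The rank of a matrix is invariant under field extension: the rank normal form over `F` is a 0-1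
matrix, and it stays a normal form after applying `φ`. -/
theorem rank_map_field {F K : Type*} [Field F] [Field K] (φ : F →+* K) {n : ℕ}
    (M : Matrix (Fin n) (Fin n) F) : (M.map φ).rank = M.rank := by
  classical
  obtain ⟨V, U, e, hV, hU, h⟩ := M.exists_rank_normal_form
  have hV' : IsUnit (V.map φ).det :=
    (Matrix.isUnit_iff_isUnit_det _).1 (hV.map φ.mapMatrix)
  have hU' : IsUnit (U.map φ).det :=
    (Matrix.isUnit_iff_isUnit_det _).1 (hU.map φ.mapMatrix)
  rw [← Matrix.rank_mul_eq_right_of_isUnit_det _ (M.map φ) hV',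
    ← Matrix.rank_mul_eq_left_of_isUnit_det _ (V.map φ * M.map φ) hU',
    ← Matrix.map_mul, ← Matrix.map_mul, h, ← Matrix.submatrix_map, Matrix.rank_submatrix,
    Matrix.fromBlocks_map]
  simp only [Matrix.map_zero, Matrix.map_one, map_zero, map_one]
  rw [← Matrix.diagonal_one, ← Matrix.diagonal_zero, Matrix.fromBlocks_diagonal,
    Matrix.rank_diagonal, Fintype.card_subtype, Finset.card_filter, Fintype.sum_sum_type]
  simp

/-- The Moore matrix of a basis is invertible: a linear relation between its rows is a linear relation
between the distinct automorphisms `x ↦ x^{q^i}`, `i < n`, checked on a basis. -/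
theorem moore_det_ne_zero {F K : Type*} [Field F] [Fintype F] [Field K] [Finite K] [Algebra F K]
    {n : ℕ} (hn : Module.finrank F K = n) (b : Module.Basis (Fin n) F K) :
    (Matrix.of fun i k : Fin n => b k ^ Fintype.card F ^ (i : ℕ)).det ≠ 0 := by
  intro h0
  obtain ⟨c, hc, hc0⟩ := Matrix.exists_vecMul_eq_zero_iff.2 h0
  apply hc
  let s : Fin n → (K →ₐ[F] K) := fun i => FiniteField.frobeniusAlgHom F K ^ (i : ℕ)
  have hs : ∀ i x, s i x = x ^ Fintype.card F ^ (i : ℕ) := by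
    intro i x
    simp only [s, AlgHom.coe_pow, FiniteField.coe_frobeniusAlgHom, pow_iterate]
  have hinj : Function.Injective s := by
    intro i j hij
    subst hn
    exact (FiniteField.bijective_frobeniusAlgHom_pow F K).1 hij
  have hli := (linearIndependent_toLinearMap F K K).comp s hinj
  rw [Fintype.linearIndependent_iff] at hli
  funext i
  refine hli c ?_ i
  refine b.ext fun k => ?_
  have := congrFun hc0 k
  simpa [Matrix.vecMul, dotProduct, hs] using this

theorem galoisField_embeds (p m n : ℕ) [Fact p.Prime] (hm : 0 < m)
    (K : Type) [Field K] [Fintype K] (hK : Fintype.card K = (p ^ m) ^ n) :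
    Nonempty (GaloisField p m →+* K) := by
  have hch : CharP K p := by
    rw [← pow_mul] at hK
    exact charP_of_card_eq_prime_pow hK
  let := ZMod.algebra K p
  have hfr : Module.finrank (ZMod p) K = m * n := by
    have := Module.card_eq_pow_finrank (K := ZMod p) (V := K)
    rw [hK, ZMod.card, ← pow_mul] at this
    exact (Nat.pow_right_injective (Fact.out : p.Prime).two_le this).symm
  obtain ⟨f⟩ := FiniteField.nonempty_algHom_of_finrank_dvd (F := ZMod p) (K := GaloisField p m)
    (L := K) (by rw [hfr, GaloisField.finrank p hm.ne']; exact dvd_mul_right _ _)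
  exact ⟨f.toRingHom⟩

/-- The theorem relative to a given embedding `F → K`, with `q` the cardinality of `F`. -/
theorem card_range_eq_pow_dickson_rank {F K : Type*} [Field F] [Fintype F] [Field K] [Finite K] [Algebra F K]
    {n : ℕ} (hn : 0 < n) (hfr : Module.finrank F K = n) (a : Fin n → K) :
    Nat.card (Set.range fun x : K => ∑ i : Fin n, a i * x ^ Fintype.card F ^ (i : ℕ)) =
      Fintype.card F ^ (Matrix.of fun i j : Fin n =>
        (a ⟨(n + (j : ℕ) - (i : ℕ)) % n, Nat.mod_lt _ hn⟩) ^ Fintype.card F ^ (i : ℕ)).rank := by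
  classical
  have : Module.Finite F K := Module.finite_of_finrank_pos (hfr ▸ hn)
  let b := Module.finBasisOfFinrankEq F K hfr
  let s : ℕ → (K →ₐ[F] K) := fun i => FiniteField.frobeniusAlgHom F K ^ i
  have hs : ∀ i x, s i x = x ^ Fintype.card F ^ i := by
    intro i x
    simp only [s, AlgHom.coe_pow, FiniteField.coe_frobeniusAlgHom, pow_iterate]
  have hsn : ∀ i x, s i x = s (i % n) x := by
    intro i x
    have h1 : FiniteField.frobeniusAlgHom F K ^ n = 1 := by
      rw [← hfr, ← FiniteField.orderOf_frobeniusAlgHom F K]; exact pow_orderOf_eq_one _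
    simp only [s]
    rw [pow_eq_pow_mod i h1]
  have hsa : ∀ i j x, s i (s j x) = s (i + j) x := by
    intro i j x
    simp only [s, pow_add, AlgHom.mul_apply]
  let f : K →ₗ[F] K := ∑ i : Fin n, a i • (s i).toLinearMap
  have hf : ∀ x, f x = ∑ i : Fin n, a i * s i x := by
    intro x; simp [f]
  let D : Matrix (Fin n) (Fin n) K := Matrix.of fun i j : Fin n =>
        s i (a ⟨(n + (j : ℕ) - (i : ℕ)) % n, Nat.mod_lt _ hn⟩)
  let W : Matrix (Fin n) (Fin n) K := Matrix.of fun i k : Fin n => s i (b k)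
  have hW : W.det ≠ 0 := by simpa only [W, hs] using moore_det_ne_zero hfr b
  let M := LinearMap.toMatrix b b f
  have hWD : W * M.map (algebraMap F K) = D * W := by
    ext i j
    have hl : (W * M.map (algebraMap F K)) i j = s i (f (b j)) := by
      conv_rhs => rw [← b.sum_repr (f (b j)), map_sum]
      simp [Matrix.mul_apply, W, M, LinearMap.toMatrix_apply, Algebra.smul_def, mul_comm]
    rw [hl, hf, map_sum, Matrix.mul_apply]
    have : NeZero n := ⟨hn.ne'⟩
    -- The term `a_l` of `f` contributes to the column `l + i mod n` of row `i` of `D`.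
    refine Fintype.sum_equiv (Equiv.addRight i) _ _ fun l => ?_
    have hidx : (n + ((l + i : Fin n) : ℕ) - (i : ℕ)) % n = l := by
      have hl := l.2
      have hi := i.2
      rw [Fin.val_add]
      rcases lt_or_ge ((l : ℕ) + i) n with h | h
      · rw [Nat.mod_eq_of_lt h, show n + ((l : ℕ) + i) - i = l + n by omega, Nat.add_mod_right,
          Nat.mod_eq_of_lt hl]
      · rw [Nat.mod_eq_sub_mod h, Nat.mod_eq_of_lt (show (l : ℕ) + i - n < n by omega),
          show n + ((l : ℕ) + i - n) - i = l by omega, Nat.mod_eq_of_lt hl]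
    simp only [Equiv.coe_addRight, D, W, Matrix.of_apply, hidx, map_mul, hsa, Fin.eta]
    rw [hsn (i + l), Fin.val_add, add_comm]
  have hrank : D.rank = Module.finrank F (LinearMap.range f) := by
    rw [← Matrix.rank_mul_eq_left_of_det_ne_zero W D hW, ← hWD,
      Matrix.rank_mul_eq_right_of_det_ne_zero W _ hW, rank_map_field,
      Matrix.rank_eq_finrank_range_toLin M b b, Matrix.toLin_toMatrix]
  have hD : (Matrix.of fun i j : Fin n =>
        (a ⟨(n + (j : ℕ) - (i : ℕ)) % n, Nat.mod_lt _ hn⟩) ^ Fintype.card F ^ (i : ℕ)) = D := by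
    simp only [D, hs]
  have hfr' : (Set.range fun x : K => ∑ i : Fin n, a i * x ^ Fintype.card F ^ (i : ℕ)) =
      (LinearMap.range f : Set K) := by
    simp only [LinearMap.coe_range, ← hs, ← hf]
  rw [hD, hrank, hfr', ← Nat.card_eq_fintype_card]
  exact Module.natCard_eq_pow_finrank


/-- The rank of the `F_q`-linear map `x ↦ ∑ a_i x^{q^i}` on `F_{q^n}` equals the rank of
its Dickson (q-circulant) matrix `D_f`, with `(i,j)` entry `a_{(j-i) mod n}^{q^i}`.
The rank of the linear map is encoded via the size of its image: the image is an
`F_q`-subspace of cardinality `q^rank`. -/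
theorem stmt_6 (p m q n : ℕ) (hp : p.Prime) (hm : 0 < m) (hq : q = p ^ m) (hn : 0 < n)
    (K : Type) [Field K] [Fintype K] (hK : Fintype.card K = q ^ n)
    (a : Fin n → K)
    (D : Matrix (Fin n) (Fin n) K)
    (hD : D = Matrix.of fun i j : Fin n =>
      (a ⟨(n + (j : ℕ) - (i : ℕ)) % n, Nat.mod_lt _ hn⟩) ^ q ^ (i : ℕ)) :
    Nat.card (Set.range fun x : K => ∑ i : Fin n, a i * x ^ q ^ (i : ℕ)) = q ^ D.rank := by
  have : Fact p.Prime := ⟨hp⟩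
  obtain ⟨φ⟩ := galoisField_embeds p m n hm K (hq ▸ hK)
  let := φ.toAlgebra
  let : Fintype (GaloisField p m) := Fintype.ofFinite _
  have hc : Fintype.card (GaloisField p m) = q := by
    rw [← Nat.card_eq_fintype_card, GaloisField.card p m hm.ne', hq]
  have hq2 : 2 ≤ q := hc ▸ Fintype.one_lt_card
  have hfr : Module.finrank (GaloisField p m) K = n := by
    have := Module.card_eq_pow_finrank (K := GaloisField p m) (V := K)
    rw [hK, hc] at this
    exact (Nat.pow_right_injective hq2 this).symm
  subst hD
  have := card_range_eq_pow_dickson_rank hn hfr a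
  rwa [hc] at this
end

section
/- Let q be a prime power and let n, s be coprime positive integers. Let f_0, …, f_{n−1} ∈ F_{q^n}. Define φ1 : F_{q^{sn}} → F_{q^{sn}} by φ1(x) = Σ_{i=0}^{n−1} f_i x^{q^{is}}, which is F_{q^s}-linear, and φ2 : F_{q^n} → F_{q^n} by φ2(x) = Σ_{i=0}^{n−1} f_i x^{q^{is}}, which is F_q-linear. Then the rank of φ1 as an F_{q^s}-linear map (the F_{q^s}-dimension of its image) equals the rank of φ2 as an F_q-linear map (the F_q-dimension of its image). -/
/-!
Write `E = F_{q^n}` and `K = F_{q^s}` for the fixed fields inside `L = F_{q^{sn}}`.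
Since `gcd(s, n) = 1`, the compositum of `E` and `K` is all of `L`, so `K` spans `L` over `E`, and
there is an `E`-basis `e_1, …, e_s` of `L` whose members lie in `K`.
The map `φ(x) = ∑ f_i x^{q^{is}}` is `K`-linear and maps `E` to `E`, hence
`φ(∑ x_j e_j) = ∑ φ(x_j) e_j` for `x_j ∈ E`. Thus, in the coordinates given by `e`, the image of `φ`
on `L` is the `s`-fold product of the image of `φ` on `E`, which is the claimed identity of
cardinalities.
-/

/-- The subfield of `L` of fixed points of the `k`-th power of the `p`-Frobenius, that is, the
solutions of `x ^ p ^ k = x`. -/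
def frobFixed (L : Type) [Field L] (p : ℕ) [ExpChar L p] (k : ℕ) : Subfield L :=
  (iterateFrobenius L p k).eqLocusField (RingHom.id L)

theorem mem_frobFixed {L : Type} [Field L] {p : ℕ} [ExpChar L p] {k : ℕ} {x : L} :
    x ∈ frobFixed L p k ↔ x ^ p ^ k = x := by
  simp [frobFixed, RingHom.mem_eqLocusField, iterateFrobenius_def]

/-- The nonzero fixed points form the kernel of the `(p ^ k - 1)`-power map on the cyclic group
`Lˣ`. -/
theorem card_frobFixed {L : Type} [Field L] [Finite L] {p : ℕ} [ExpChar L p] (hp : 1 < p)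
    {k N : ℕ} (hL : Nat.card L = p ^ N) (hk : 0 < k) (hkN : k ∣ N) :
    Nat.card (frobFixed L p k) = p ^ k := by
  have h1 : 1 < p ^ k := Nat.one_lt_pow hk.ne' hp
  have hker := IsCyclic.card_powMonoidHom_ker (G := Lˣ) (p ^ k - 1)
  rw [Nat.card_units, hL, Nat.gcd_eq_right (Nat.pow_sub_one_dvd_pow_sub_one p hkN)] at hker
  have key : ∀ x : L, x ≠ 0 → (x ^ p ^ k = x ↔ x ^ (p ^ k - 1) = 1) := by
    intro x hx
    conv_lhs => rw [← Nat.sub_add_cancel h1.le, pow_succ]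
    exact mul_eq_right₀ hx
  have e : (frobFixed L p k)ˣ ≃ (powMonoidHom (p ^ k - 1) : Lˣ →* Lˣ).ker :=
    Equiv.ofBijective
      (fun u => ⟨Units.map ((frobFixed L p k).subtype : frobFixed L p k →* L) u, by
        rw [MonoidHom.mem_ker, powMonoidHom_apply, Units.ext_iff]
        have := (key ((u : frobFixed L p k) : L) (by simp)).1
          (mem_frobFixed.1 (u : frobFixed L p k).2)
        simpa using this⟩)
      ⟨fun u v h => by
        ext
        simpa [Units.ext_iff] using h,
       fun ⟨v, hv⟩ => by
        rw [MonoidHom.mem_ker, powMonoidHom_apply, Units.ext_iff] at hv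
        have hv' : (v : L) ∈ frobFixed L p k :=
          mem_frobFixed.2 ((key v v.ne_zero).2 (by simpa using hv))
        refine ⟨Units.mk0 ⟨v, hv'⟩ (by simp [Subtype.ext_iff]), ?_⟩
        ext
        simp⟩
  have := Nat.card_congr e
  rw [hker, Nat.card_units] at this
  have hpos : 0 < Nat.card (frobFixed L p k) := Nat.card_pos
  omega

/-- Two subfields of coprime codegree generate the whole field, so one of them spans it over
the other. -/
theorem span_eq_top_of_coprime {L : Type} [Field L] [Finite L] (E K : Subfield L)
    (h : Nat.Coprime (Module.finrank E L) (Module.finrank K L)) :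
    Submodule.span E (K : Set L) = ⊤ := by
  let M : IntermediateField E L := IntermediateField.adjoin E (K : Set L)
  have hKM : K ≤ M.toSubfield := fun x hx => IntermediateField.subset_adjoin E (K : Set L) hx
  have h1 : Module.finrank M L ∣ Module.finrank E L :=
    ⟨_, ((mul_comm _ _).trans (Module.finrank_mul_finrank E M L)).symm⟩
  have h2 : Module.finrank M L ∣ Module.finrank K L := by
    let : Algebra K M := (Subfield.inclusion hKM).toAlgebra
    have : IsScalarTower K M L := IsScalarTower.of_algebraMap_eq fun _ => rfl
    exact ⟨_, ((mul_comm _ _).trans (Module.finrank_mul_finrank K M L)).symm⟩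
  have h3 : Module.finrank M L = 1 := Nat.eq_one_of_dvd_coprimes h h1 h2
  have h4 : M = ⊤ := IntermediateField.finrank_eq_one_iff_eq_top.1 h3
  have h5 : Algebra.adjoin E (K : Set L) = ⊤ := by
    rw [← IntermediateField.adjoin_toSubalgebra]
    change M.toSubalgebra = ⊤
    rw [h4]; rfl
  have h6 := Algebra.adjoin_eq_span E (K : Set L)
  rw [h5] at h6
  have h7 : (Submonoid.closure (K : Set L) : Set L) = K :=
    congrArg _ (Submonoid.closure_eq K.toSubmonoid)
  rw [h7] at h6
  rw [← h6]; rfl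

/-- For `E = F_{q^n}` and `K = F_{q^s}` this expresses the linear disjointness of the two
subfields over `F_q`. -/
theorem exists_basis_mem {L : Type} [Field L] [Finite L] (E K : Subfield L)
    (h : Nat.Coprime (Module.finrank E L) (Module.finrank K L)) :
    ∃ e : Module.Basis (Fin (Module.finrank E L)) E L, ∀ j, e j ∈ K := by
  have hs := span_eq_top_of_coprime E K h
  obtain ⟨b, hbK, hspan, hli⟩ := exists_linearIndependent E (K : Set L)
  let B : Module.Basis b E L := Module.Basis.mk hli (by
    rw [Subtype.range_coe, hspan, hs])
  have : Fintype b := Fintype.ofFinite b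
  have hc : Fintype.card b = Module.finrank E L := (Module.finrank_eq_card_basis B).symm
  refine ⟨B.reindex (Fintype.equivFinOfCardEq hc), fun j => ?_⟩
  rw [Module.Basis.reindex_apply, Module.Basis.mk_apply]
  exact hbK (Subtype.coe_prop _)


/-- For coprime `n` and `s`, the `F_{q^s}`-rank of `x ↦ ∑ f_i x^{q^{is}}` on `F_{q^{sn}}`
equals the `F_q`-rank of the same formula on the subfield `F_{q^n}`. Ranks are encoded
via cardinalities of images: the `F_{q^s}`-image has size `(q^s)^{r₁}` and the `F_q`-image
has size `q^{r₂}`, so `r₁ = r₂` is equivalent to `|image₂|^s = |image₁|`. -/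
theorem stmt_7 (p m q : ℕ) (hp : p.Prime) (hm : 0 < m) (hq : q = p ^ m)
    (n s : ℕ) (hn : 0 < n) (hs : 0 < s) (hcop : Nat.Coprime s n)
    (L : Type) [Field L] [Fintype L] (hL : Fintype.card L = q ^ (s * n))
    (f : Fin n → L) (hf : ∀ i, f i ^ q ^ n = f i) :
    Nat.card {y : L | ∃ x : L, x ^ q ^ n = x ∧
        y = ∑ i : Fin n, f i * x ^ q ^ ((i : ℕ) * s)} ^ s
      = Nat.card (Set.range fun x : L => ∑ i : Fin n, f i * x ^ q ^ ((i : ℕ) * s)) := by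
  subst hq
  have : Fact p.Prime := ⟨hp⟩
  have hcard : Nat.card L = p ^ (m * (s * n)) := by
    rw [Nat.card_eq_fintype_card, hL, ← pow_mul]
  have : CharP L p := charP_of_card_eq_prime_pow (by rw [← Nat.card_eq_fintype_card, hcard])
  have : ExpChar L p := ExpChar.prime hp
  set E := frobFixed L p (m * n) with hE
  set K := frobFixed L p (m * s) with hK
  have memE : ∀ x : L, x ∈ E ↔ x ^ (p ^ m) ^ n = x := fun x => by
    rw [hE, mem_frobFixed, pow_mul]
  have memK : ∀ x : L, x ∈ K ↔ x ^ (p ^ m) ^ s = x := fun x => by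
    rw [hK, mem_frobFixed, pow_mul]
  have cE : Nat.card E = p ^ (m * n) :=
    card_frobFixed hp.one_lt hcard (by positivity) ⟨s, by ring⟩
  have cK : Nat.card K = p ^ (m * s) :=
    card_frobFixed hp.one_lt hcard (by positivity) ⟨n, by ring⟩
  have dE : Module.finrank E L = s := by
    have := Module.natCard_eq_pow_finrank (K := E) (V := L)
    rw [hcard, cE, ← pow_mul] at this
    have := Nat.pow_right_injective hp.two_le this
    refine (Nat.eq_of_mul_eq_mul_left (show 0 < m * n by positivity) ?_)
    linarith
  have dK : Module.finrank K L = n := by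
    have := Module.natCard_eq_pow_finrank (K := K) (V := L)
    rw [hcard, cK, ← pow_mul] at this
    have := Nat.pow_right_injective hp.two_le this
    refine (Nat.eq_of_mul_eq_mul_left (show 0 < m * s by positivity) ?_)
    linarith
  obtain ⟨e, heK⟩ := exists_basis_mem E K (by rw [dE, dK]; exact hcop)
  set φ : L → L := fun x => ∑ i : Fin n, f i * x ^ (p ^ m) ^ ((i : ℕ) * s) with hφ
  have φE : ∀ x ∈ E, φ x ∈ E := fun x hx =>
    sum_mem fun i _ => mul_mem ((memE _).2 (hf i)) (pow_mem hx _)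
  have epow : ∀ j (i : ℕ), e j ^ (p ^ m) ^ (i * s) = e j := by
    intro j i
    induction i with
    | zero => simp
    | succ i ih => rw [add_mul, one_mul, pow_add, pow_mul, ih, (memK _).1 (heK j)]
  have φsum : ∀ x : Fin (Module.finrank E L) → L, φ (∑ j, x j * e j) = ∑ j, φ (x j) * e j := by
    intro x
    simp only [hφ, Finset.sum_mul]
    rw [Finset.sum_comm]
    refine Finset.sum_congr rfl fun i _ => ?_
    rw [← pow_mul p, sum_pow_char_pow, Finset.mul_sum]
    refine Finset.sum_congr rfl fun j _ => ?_
    rw [mul_pow, pow_mul p, epow, mul_assoc]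
  set S : Set L := {y : L | ∃ x : L, x ^ (p ^ m) ^ n = x ∧ y = φ x} with hS
  have SE : ∀ y ∈ S, y ∈ E := by
    rintro _ ⟨x, hx, rfl⟩
    exact φE x ((memE x).2 hx)
  change Nat.card S ^ s = Nat.card (Set.range φ)
  -- Taking coordinates in the basis `e` identifies the image of `φ` with the power `S ^ s`.
  have hbij : Function.Bijective (fun y : Fin (Module.finrank E L) → S =>
      (⟨∑ j, (y j : L) * e j, by
        choose x _ hxy using fun j => (y j).2
        exact ⟨∑ j, x j * e j, by rw [φsum]; simp only [hxy]⟩⟩ : Set.range φ)) := by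
    constructor
    · intro y z hyz
      have h := Subtype.ext_iff.1 hyz
      have h' : e.equivFun.symm (fun j => ⟨y j, SE _ (y j).2⟩) =
          e.equivFun.symm (fun j => ⟨z j, SE _ (z j).2⟩) := by
        rw [Module.Basis.equivFun_symm_apply, Module.Basis.equivFun_symm_apply]
        exact h
      have h'' := e.equivFun.symm.injective h'
      funext j
      exact Subtype.ext (congrArg (fun t : E => (t : L)) (congrFun h'' j))
    · rintro ⟨_, x, rfl⟩
      refine ⟨fun j => ⟨φ (e.equivFun x j), _, (memE _).1 (e.equivFun x j).2, rfl⟩, ?_⟩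
      refine Subtype.ext ?_
      change ∑ j, φ (e.equivFun x j) * e j = φ x
      rw [← φsum]
      exact congrArg φ (e.sum_equivFun x)
  rw [← Nat.card_congr (Equiv.ofBijective _ hbij), Nat.card_fun, Nat.card_fin, dE]
end

section
/- Let q be a prime power, let n = 2k and s be coprime positive integers, and set q̄ = q^s. Let η, b0, b1, b2 ∈ F_{q^n} and define the F_{q̄}-linear map ψ : F_{q̄^n} → F_{q̄^n} by ψ(x) = b0 x^{q̄^{k}} + b1 x^{q̄^{k−1}} + (b1 x)^{q̄^{k+1}} + η b2 x^{q̄^{k−2}} + (η b2 x)^{q̄^{k+2}}. Then ψ maps the subfield F_{q^n} into itself, and the F_q-linear map ψ restricted to F_{q^n} has the same rank (F_q-dimension of image) as the rank of ψ as an F_{q̄}-linear map on F_{q^{sn}} (F_{q̄}-dimension of image). -/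
/-!
Write `n = 2k`, let `K = F_{q^n}` be the subfield of `L` cut out by `x ^ q ^ n = x`, and let `ω`
generate the multiplicative group of the subfield `F_{q^s}` of `L`. Every exponent in `ψ` is a power
of `q ^ s`, so `ψ` is additive and commutes with multiplication by `ω`; its coefficients lie in `K`,
so it preserves `K`. The precise exponents play no role; in particular `k - 2` may be truncated when
`k = 1`.

Since `ω` has order `q ^ s - 1` and `K(ω)` has `q ^ (n d)` elements, with `d` the degree of `ω` over
`K`, the exponent `s` divides `n d`, hence divides `d` because `gcd (n, s) = 1`. Counting gives
`d = s`, so `1, ω, …, ω ^ (s - 1)` is a `K`-basis of `L` (`exists_basis_powers`). In these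
coordinates `ψ` acts on `K ^ s` as `s` copies of its restriction to `K`, so its image is a product of
`s` copies of `ψ(K)` (`card_image_pow_eq_card_range`).
-/

/-- The subfield of elements fixed by the `p ^ e`-th power map, where `p` is the exponential
characteristic. -/
def fixedPowSubfield (L : Type) [Field L] (p e : ℕ) [ExpChar L p] : Subfield L where
  carrier := {x | x ^ p ^ e = x}
  mul_mem' := by
    intro a b ha hb
    simp only [Set.mem_ofPred_eq] at *
    rw [mul_pow, ha, hb]
  one_mem' := by simp
  add_mem' := by
    intro a b ha hb
    simp only [Set.mem_ofPred_eq] at *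
    rw [add_pow_expChar_pow, ha, hb]
  zero_mem' := by
    have : p ^ e ≠ 0 := pow_ne_zero _ (expChar_pos L p).ne'
    exact zero_pow this
  neg_mem' := by
    intro a ha
    simp only [Set.mem_ofPred_eq] at *
    have h := sub_pow_expChar_pow (p := p) (n := e) (0 : L) a
    have : p ^ e ≠ 0 := pow_ne_zero _ (expChar_pos L p).ne'
    rwa [zero_pow this, ha, zero_sub] at h
  inv_mem' := by
    intro a ha
    simp only [Set.mem_ofPred_eq] at *
    rw [inv_pow, ha]

lemma mem_fixedPowSubfield {L : Type} [Field L] {p e : ℕ} [ExpChar L p] {x : L} :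
    x ∈ fixedPowSubfield L p e ↔ x ^ p ^ e = x := Iff.rfl

/-- A unit of every order `N` dividing `|L| - 1` exists, as `Lˣ` is cyclic. -/
lemma exists_unit_orderOf_eq {L : Type} [Field L] [Finite L] {N : ℕ}
    (hN : N ∣ Nat.card L - 1) : ∃ u : Lˣ, orderOf u = N := by
  obtain ⟨g, hg⟩ := (isCyclic_iff_exists_orderOf_eq_natCard (α := Lˣ)).1 inferInstance
  have hc : orderOf g = Nat.card L - 1 := by rw [hg, Nat.card_units]
  refine ⟨g ^ (orderOf g / N), orderOf_pow_orderOf_div (orderOf_pos g).ne' (hc ▸ hN)⟩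

/-- If `p ^ e - 1` divides `|L| - 1`, the fixed subfield `K` has `p ^ e` elements: `p ^ e - 1` and
`|K| - 1` divide each other, as `Lˣ` and `Kˣ` are cyclic. -/
lemma card_fixedPowSubfield {L : Type} [Field L] [Finite L] {p e : ℕ} [ExpChar L p]
    (h : p ^ e - 1 ∣ Nat.card L - 1) (he : 0 < p ^ e) :
    Nat.card (fixedPowSubfield L p e) = p ^ e := by
  have hK : 0 < Nat.card (fixedPowSubfield L p e) := Nat.card_pos
  suffices Nat.card (fixedPowSubfield L p e) - 1 = p ^ e - 1 by omega
  apply Nat.dvd_antisymm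
  · obtain ⟨u, hu⟩ := exists_unit_orderOf_eq (L := fixedPowSubfield L p e) dvd_rfl
    rw [← hu, orderOf_dvd_iff_pow_eq_one]
    have h1 : u ^ (p ^ e) = u := by
      ext
      simpa using mem_fixedPowSubfield.1 (u : fixedPowSubfield L p e).2
    rw [← Nat.sub_add_cancel (Nat.succ_le_of_lt he), pow_succ] at h1
    simpa using h1
  · obtain ⟨u, hu⟩ := exists_unit_orderOf_eq h
    have hu1 : (u : L) ^ p ^ e = u := by
      have : u ^ (p ^ e - 1 + 1) = u := by rw [pow_succ, ← hu, pow_orderOf_eq_one, one_mul]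
      rw [Nat.sub_add_cancel (Nat.succ_le_of_lt he)] at this
      exact_mod_cast congrArg Units.val this
    have hne : (⟨u, hu1⟩ : fixedPowSubfield L p e) ≠ 0 := by
      intro h0
      exact u.ne_zero (congrArg Subtype.val h0)
    have h2 : (⟨u, hu1⟩ : fixedPowSubfield L p e) ^
        (Nat.card (fixedPowSubfield L p e) - 1) = 1 := by
      have := pow_card_eq_one' (x := Units.mk0 _ hne)
      rw [Nat.card_units] at this
      simpa using congrArg Units.val this
    rw [← hu, orderOf_dvd_iff_pow_eq_one]
    ext
    simpa using congrArg Subtype.val h2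

lemma dvd_of_pow_sub_one_dvd {q a b : ℕ} (hq : 1 < q) (h : q ^ a - 1 ∣ q ^ b - 1) : a ∣ b := by
  have h1 := Nat.gcd_eq_left h
  rw [Nat.pow_sub_one_gcd_pow_sub_one] at h1
  have h2 : q ^ a.gcd b = q ^ a := by
    have := Nat.pow_pos (n := a) (show 0 < q by omega)
    have := Nat.pow_pos (n := a.gcd b) (show 0 < q by omega)
    omega
  exact Nat.gcd_eq_left_iff_dvd.1 (Nat.pow_right_injective hq h2)

/-- Coordinates of `F_{q^{sn}}` over `F_{q^n}` with respect to the powers of an element `ω` of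
`F_{q^s}`. -/
lemma exists_basis_powers {L : Type} [Field L] [Finite L] (K : Subfield L) {q n s : ℕ}
    (hq : 1 < q) (hcop : n.Coprime s)
    (hL : Nat.card L = q ^ (s * n)) (hK : Nat.card K = q ^ n) :
    ∃ ω : L, ω ^ q ^ s = ω ∧
      Function.Bijective (fun c : Fin s → K => ∑ i, (c i : L) * ω ^ (i : ℕ)) := by
  have hqs : 0 < q ^ s := Nat.pow_pos (by omega)
  obtain ⟨u, hu⟩ := exists_unit_orderOf_eq (L := L) (N := q ^ s - 1)
    (by rw [hL]; exact Nat.pow_sub_one_dvd_pow_sub_one q (Dvd.intro n rfl))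
  have hu1 : (u : L) ^ q ^ s = u := by
    have : u ^ (q ^ s - 1 + 1) = u := by rw [pow_succ, ← hu, pow_orderOf_eq_one, one_mul]
    rw [Nat.sub_add_cancel (Nat.succ_le_of_lt hqs)] at this
    exact_mod_cast congrArg Units.val this
  refine ⟨u, hu1, ?_⟩
  have hint : IsIntegral K (u : L) := Algebra.IsIntegral.isIntegral _
  have hd : s ∣ (minpoly K (u : L)).natDegree := by
    apply hcop.symm.dvd_of_dvd_mul_left
    apply dvd_of_pow_sub_one_dvd hq
    have hc : Nat.card (IntermediateField.adjoin K {(u : L)}) =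
        q ^ (n * (minpoly K (u : L)).natDegree) := by
      rw [Module.natCard_eq_pow_finrank (K := K), hK, IntermediateField.adjoin.finrank hint,
        pow_mul]
    let w : IntermediateField.adjoin K {(u : L)} :=
      ⟨u, IntermediateField.mem_adjoin_simple_self K _⟩
    have hne : w ≠ 0 := fun h0 => u.ne_zero (congrArg Subtype.val h0)
    have h2 : w ^ (Nat.card (IntermediateField.adjoin K {(u : L)}) - 1) = 1 := by
      have := pow_card_eq_one' (x := Units.mk0 _ hne)
      rw [Nat.card_units] at this
      simpa using congrArg Units.val this
    rw [← hu, orderOf_dvd_iff_pow_eq_one, ← hc]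
    ext
    simpa [w] using congrArg Subtype.val h2
  have hle : s ≤ (minpoly K (u : L)).natDegree :=
    Nat.le_of_dvd (minpoly.natDegree_pos hint) hd
  have hli : LinearIndependent K (fun i : Fin s => (u : L) ^ (i : ℕ)) :=
    (linearIndependent_pow (K := K) (u : L)).comp (Fin.castLE hle) (Fin.castLE_injective hle)
  have hinj : Function.Injective
      (fun c : Fin s → K => ∑ i, (c i : L) * (u : L) ^ (i : ℕ)) := by
    have := hli.fintypeLinearCombination_injective
    convert this using 1
    ext c
    simp [Fintype.linearCombination_apply, Subfield.smul_def]
  refine (Nat.bijective_iff_injective_and_card _).2 ⟨hinj, ?_⟩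
  rw [Nat.card_fun, hK, hL, Nat.card_fin, ← pow_mul, mul_comm]

/-- In coordinates with respect to powers of `ω`, an additive map commuting with `ω` and preserving
`K` acts coordinatewise, so its image is a product of `s` copies of the image of `K`. -/
lemma card_image_pow_eq_card_range {L : Type} [Field L] [Finite L] (K : Subfield L) {s : ℕ}
    (ω : L) (hbij : Function.Bijective (fun c : Fin s → K => ∑ i, (c i : L) * ω ^ (i : ℕ)))
    (f : L →+ L) (hω : ∀ x, f (x * ω) = f x * ω) (hK : ∀ x ∈ K, f x ∈ K) :
    Nat.card (f '' (K : Set L)) ^ s = Nat.card (Set.range f) := by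
  have hpow : ∀ (i : ℕ) x, f (x * ω ^ i) = f x * ω ^ i := by
    intro i
    induction i with
    | zero => simp
    | succ i ih => intro x; rw [pow_succ, ← mul_assoc, hω, ih, mul_assoc]
  have hsum : ∀ c : Fin s → K, f (∑ i, (c i : L) * ω ^ (i : ℕ)) =
      ∑ i, f (c i) * ω ^ (i : ℕ) := by
    intro c
    rw [map_sum]
    exact Finset.sum_congr rfl fun i _ => hpow _ _
  have hmem : ∀ y : f '' (K : Set L), (y : L) ∈ K := by
    rintro ⟨_, x, hx, rfl⟩
    exact hK x hx
  have hrange : ∀ c : Fin s → f '' (K : Set L),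
      ∑ i, (c i : L) * ω ^ (i : ℕ) ∈ Set.range f := by
    intro c
    choose x hx hfx using fun i => (c i).2
    refine ⟨∑ i, x i * ω ^ (i : ℕ), ?_⟩
    rw [hsum fun i => ⟨x i, hx i⟩]
    simp [hfx]
  have hcard : Nat.card (Fin s → f '' (K : Set L)) = Nat.card (f '' (K : Set L)) ^ s := by
    rw [Nat.card_fun, Nat.card_fin]
  rw [← hcard]
  refine Nat.card_eq_of_bijective (fun c => ⟨_, hrange c⟩) ⟨?_, ?_⟩
  · intro c c' h
    have h1 := @hbij.1 (fun i => ⟨c i, hmem _⟩) (fun i => ⟨c' i, hmem _⟩)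
      (congrArg Subtype.val h)
    ext i
    exact congrArg (fun y : K => (y : L)) (congrFun h1 i)
  · rintro ⟨_, x, rfl⟩
    obtain ⟨c, rfl⟩ := hbij.2 x
    exact ⟨fun i => ⟨f (c i), c i, (c i).2, rfl⟩, Subtype.ext (hsum c).symm⟩


/-- With `n = 2k`, `gcd(n, s) = 1` and `q̄ = q^s`, the map
`ψ(x) = b₀x^{q̄^k} + b₁x^{q̄^{k-1}} + (b₁x)^{q̄^{k+1}} + ηb₂x^{q̄^{k-2}} + (ηb₂x)^{q̄^{k+2}}`
with coefficients in `F_{q^n}` maps the subfield `F_{q^n}` of `F_{q^{sn}}` into itself,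
and its restriction has the same rank over `F_q` as `ψ` has over `F_{q̄}`. Ranks are
encoded via cardinalities of images (`q^r` resp. `(q^s)^r`). -/
theorem stmt_8 (p m q : ℕ) (hp : p.Prime) (hm : 0 < m) (hq : q = p ^ m)
    (k s : ℕ) (hk : 0 < k) (hs : 0 < s) (hcop : Nat.Coprime (2 * k) s)
    (L : Type) [Field L] [Fintype L] (hL : Fintype.card L = q ^ (s * (2 * k)))
    (η b0 b1 b2 : L)
    (hη : η ^ q ^ (2 * k) = η) (hb0 : b0 ^ q ^ (2 * k) = b0)
    (hb1 : b1 ^ q ^ (2 * k) = b1) (hb2 : b2 ^ q ^ (2 * k) = b2)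
    (ψ : L → L)
    (hψ : ψ = fun x => b0 * x ^ (q ^ s) ^ k + b1 * x ^ (q ^ s) ^ (k - 1)
      + (b1 * x) ^ (q ^ s) ^ (k + 1) + η * b2 * x ^ (q ^ s) ^ (k - 2)
      + (η * b2 * x) ^ (q ^ s) ^ (k + 2)) :
    (∀ x : L, x ^ q ^ (2 * k) = x → (ψ x) ^ q ^ (2 * k) = ψ x) ∧
    Nat.card (ψ '' {x : L | x ^ q ^ (2 * k) = x}) ^ s = Nat.card (Set.range ψ) := by
  have hfp : Fact p.Prime := ⟨hp⟩
  have hchar : CharP L p :=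
    charP_of_card_eq_prime_pow (p := p) (f := m * (s * (2 * k))) (by rw [hL, hq, ← pow_mul])
  have hexp : ExpChar L p := ExpChar.prime hp
  have hq1 : 1 < q := hq ▸ Nat.one_lt_pow hm.ne' hp.one_lt
  have hqn : q ^ (2 * k) = p ^ (m * (2 * k)) := by rw [hq, ← pow_mul]
  have hLn : Nat.card L = q ^ (s * (2 * k)) := by rw [Nat.card_eq_fintype_card, hL]
  let K := fixedPowSubfield L p (m * (2 * k))
  have hmemK : ∀ x : L, x ∈ K ↔ x ^ q ^ (2 * k) = x := by
    intro x
    rw [hqn]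
    exact mem_fixedPowSubfield
  have hKc : Nat.card K = q ^ (2 * k) := by
    rw [hqn]
    refine card_fixedPowSubfield ?_ (Nat.pow_pos hp.pos)
    rw [← hqn, hLn]
    exact Nat.pow_sub_one_dvd_pow_sub_one q (Dvd.intro_left s rfl)
  have hadd : ∀ (j : ℕ) (x y : L),
      (x + y) ^ (q ^ s) ^ j = x ^ (q ^ s) ^ j + y ^ (q ^ s) ^ j := by
    intro j x y
    have : (q ^ s) ^ j = p ^ (m * s * j) := by rw [hq, ← pow_mul, ← pow_mul, mul_assoc]
    rw [this, add_pow_expChar_pow]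
  have hψK : ∀ x ∈ K, ψ x ∈ K := by
    have h0 := (hmemK _).2 hb0
    have h1 := (hmemK _).2 hb1
    have h2 := mul_mem ((hmemK _).2 hη) ((hmemK _).2 hb2)
    intro x hx
    rw [hψ]
    exact add_mem (add_mem (add_mem (add_mem (mul_mem h0 (pow_mem hx _))
      (mul_mem h1 (pow_mem hx _))) (pow_mem (mul_mem h1 hx) _)) (mul_mem h2 (pow_mem hx _)))
      (pow_mem (mul_mem h2 hx) _)
  refine ⟨fun x hx => (hmemK _).1 (hψK x ((hmemK x).2 hx)), ?_⟩
  obtain ⟨ω, hω, hbij⟩ := exists_basis_powers K hq1 hcop hLn hKc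
  have hωj : ∀ j : ℕ, ω ^ (q ^ s) ^ j = ω := by
    intro j
    induction j with
    | zero => simp
    | succ j ih => rw [pow_succ, pow_mul, ih, hω]
  have hψadd : ∀ x y, ψ (x + y) = ψ x + ψ y := by
    intro x y
    simp only [hψ, mul_add, hadd]
    ring
  have hψω : ∀ x, ψ (x * ω) = ψ x * ω := by
    intro x
    simp only [hψ, mul_pow, hωj]
    ring
  have hset : {x : L | x ^ q ^ (2 * k) = x} = (K : Set L) := by
    ext x
    exact (hmemK x).symm
  rw [hset]
  exact card_image_pow_eq_card_range K ω hbij (AddMonoidHom.mk' ψ hψadd) hψω hψK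
end

section
/- Let q be a prime power, k ≥ 2 an integer, n = 2k, and let b0, b1 ∈ F_{q^n} with (b0, b1) ≠ (0, 0). Then the F_q-linear map g : F_{q^n} → F_{q^n} defined by g(x) = b0 x^{q^{k}} + b1 x^{q^{k−1}} + (b1 x)^{q^{k+1}} has kernel of F_q-dimension at most 2. -/
/-!
Since `x ^ q ^ k = (x ^ q ^ (k - 1)) ^ q` and `x ^ q ^ (k + 1) = (x ^ q ^ (k - 1)) ^ q ^ 2`, the
injective map `x ↦ x ^ q ^ (k - 1)` (a power of Frobenius) sends the kernel into the root set of
`b₁ ^ q ^ (k + 1) Y ^ q ^ 2 + b₀ Y ^ q + b₁ Y`, a nonzero polynomial of degree at most `q ^ 2`.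
-/

open Polynomial in
/-- For `n = 2k`, `k ≥ 2`, and `(b₀, b₁) ≠ (0, 0)`, the `F_q`-linear map
`g(x) = b₀x^{q^k} + b₁x^{q^{k-1}} + (b₁x)^{q^{k+1}}` on `F_{q^n}` has kernel of
`F_q`-dimension at most 2, i.e. at most `q^2` elements. -/
theorem stmt_9 (p m q k : ℕ) (hp : p.Prime) (hm : 0 < m) (hq : q = p ^ m) (hk : 2 ≤ k)
    (K : Type) [Field K] [Fintype K] (hK : Fintype.card K = q ^ (2 * k))
    (b0 b1 : K) (hb : ¬ (b0 = 0 ∧ b1 = 0)) :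
    Nat.card {x : K |
      b0 * x ^ q ^ k + b1 * x ^ q ^ (k - 1) + (b1 * x) ^ q ^ (k + 1) = 0} ≤ q ^ 2 := by
  classical
  have hq2 : 2 ≤ q := by
    rw [hq]; exact hp.two_le.trans (Nat.le_self_pow hm.ne' p)
  have : Fact p.Prime := ⟨hp⟩
  have : CharP K p :=
    charP_of_card_eq_prime_pow (f := m * (2 * k)) (by rw [hK, hq, ← pow_mul])
  have hinj : Function.Injective (fun x : K => x ^ q ^ (k - 1)) := by
    have h := (iterateFrobenius K p (m * (k - 1))).injective
    intro x y hxy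
    apply h
    simpa [iterateFrobenius_def, hq, pow_mul] using hxy
  set P : K[X] := C (b1 ^ q ^ (k + 1)) * X ^ q ^ 2 + C b0 * X ^ q + C b1 * X with hP
  have hqq : q < q ^ 2 := by nlinarith
  have hdeg : P.natDegree ≤ q ^ 2 := by
    rw [hP]
    refine natDegree_add_le_of_degree_le (natDegree_add_le_of_degree_le
      (natDegree_C_mul_X_pow_le _ _) ((natDegree_C_mul_X_pow_le _ _).trans hqq.le)) ?_
    exact (natDegree_C_mul_le _ _).trans (natDegree_X_le.trans (by omega))
  have hP0 : P ≠ 0 := by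
    intro h0
    have h1 : b1 = 0 := by
      have := congrArg (fun Q : K[X] => Q.coeff 1) h0
      simpa [hP, -map_pow, coeff_X_pow, show 1 ≠ q ^ 2 by omega, show 1 ≠ q by omega] using this
    have h2 : b0 = 0 := by
      have := congrArg (fun Q : K[X] => Q.coeff q) h0
      simpa [hP, -map_pow, coeff_X, coeff_X_pow, h1, show q ≠ 0 by omega] using this
    exact hb ⟨h2, h1⟩
  have hmaps : ∀ x ∈ {x : K |
      b0 * x ^ q ^ k + b1 * x ^ q ^ (k - 1) + (b1 * x) ^ q ^ (k + 1) = 0},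
      x ^ q ^ (k - 1) ∈ (P.roots.toFinset : Set K) := by
    intro x hx
    obtain ⟨j, rfl⟩ : ∃ j, k = j + 1 := ⟨k - 1, by omega⟩
    simp only [Set.mem_ofPred_eq, Nat.add_sub_cancel] at hx
    rw [Finset.mem_coe, Multiset.mem_toFinset, mem_roots hP0, IsRoot.def, hP, Nat.add_sub_cancel]
    simp only [eval_add, eval_mul, eval_C, eval_pow, eval_X, ← pow_mul]
    rw [← hx, mul_pow]
    ring
  rw [Nat.card_coe_set_eq]
  calc _ ≤ (P.roots.toFinset : Set K).ncard :=
        Set.ncard_le_ncard_of_injOn _ hmaps hinj.injOn (Finset.finite_toSet _)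
    _ = P.roots.toFinset.card := Set.ncard_coe_finset _
    _ ≤ P.roots.card := Multiset.toFinset_card_le _
    _ ≤ P.natDegree := card_roots' P
    _ ≤ q ^ 2 := hdeg
end

section
/- Let q be an odd prime power, let η be a nonsquare in F_{q^6}, and let b2 be a nonzero element of the subfield F_{q^3} of F_{q^6}. Then there is no b1 ∈ F_{q^6} satisfying both (η b2)^{q^2+1} = b1^{q+1} and (η b2)^{q^3+1} = b1^{q^4+q}. -/
/-!
Write `c = η b₂` and `N = q⁶ - 1`. By Euler's criterion it is enough to show `η ^ (N/2) = 1`.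
Since `b₂ ^ (q³ - 1) = 1`, the element `b₂` satisfies `b₂ ^ (N/2) = 1`, so it suffices that
`c ^ (N/2) = 1`. Raising the second equation to the power `(q³ - 1)/2` gives
`c ^ (N/2) = b₁ ^ (q N/2)`. Computing `c ^ ((q³ + 1)(q² + 1)/2)` from each of the two equations gives
`b₁ ^ ((q³ + 1)/2 * (q + 1)) = b₁ ^ ((q³ + 1)/2 * (q³ + q))`, and cancelling
yields `b₁ ^ (N/2) = 1`.
-/

/-- For `q` odd, `η` a nonsquare in `F_{q^6}` and `b₂ ∈ F_{q^3}` nonzero, no `b₁ ∈ F_{q^6}`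
satisfies both `(ηb₂)^{q²+1} = b₁^{q+1}` and `(ηb₂)^{q³+1} = b₁^{q⁴+q}`. -/
theorem stmt_10 (p m q : ℕ) (hp : p.Prime) (hpodd : Odd p) (hm : 0 < m) (hq : q = p ^ m)
    (K : Type) [Field K] [Fintype K] (hK : Fintype.card K = q ^ 6)
    (η : K) (hη : ¬ ∃ z : K, z ^ 2 = η)
    (b2 : K) (hb2K : b2 ^ q ^ 3 = b2) (hb2 : b2 ≠ 0) :
    ¬ ∃ b1 : K, (η * b2) ^ (q ^ 2 + 1) = b1 ^ (q + 1) ∧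
      (η * b2) ^ (q ^ 3 + 1) = b1 ^ (q ^ 4 + q) := by
  rintro ⟨b, h1, h2⟩
  have hqodd : Odd q := hq ▸ hpodd.pow
  -- `A`, `B`, `C` are the halves of `q³ + 1`, `q³ - 1`, `q² + 1`.
  obtain ⟨A, hA⟩ : ∃ A, q ^ 3 + 1 = 2 * A := (hqodd.pow.add_odd odd_one).two_dvd
  obtain ⟨B, hB⟩ : ∃ B, q ^ 3 = 2 * B + 1 := hqodd.pow
  obtain ⟨C, hC⟩ : ∃ C, q ^ 2 + 1 = 2 * C := (hqodd.pow.add_odd odd_one).two_dvd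
  have hcard : Fintype.card K = 2 * (2 * (A * B)) + 1 := by
    have hAB : A = B + 1 := by omega
    rw [hK, show q ^ 6 = (q ^ 3) ^ 2 by ring, hB, hAB]; ring
  have hchar : ringChar K ≠ 2 := fun h => by
    have := FiniteField.even_card_of_char_two h
    omega
  have hη0 : η ≠ 0 := fun h => hη ⟨0, by simp [h]⟩
  have hc0 : η * b2 ≠ 0 := mul_ne_zero hη0 hb2
  have hb0 : b ≠ 0 := by
    rintro rfl
    rw [zero_pow (by omega)] at h1
    exact pow_ne_zero _ hc0 h1
  have hb2one : b2 ^ (2 * B) = 1 := by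
    rw [hB, pow_succ] at hb2K
    exact mul_right_cancel₀ hb2 (by rw [hb2K, one_mul])
  rw [hC] at h1
  rw [hA, show q ^ 4 + q = (q ^ 3 + 1) * q by ring, hA] at h2
  have hb : b ^ (2 * (A * B)) = 1 := by
    have hexp : 2 * A * q * C = (q + 1) * A + 2 * (A * B) := by
      calc 2 * A * q * C = A * q * (2 * C) := by ring
        _ = A * (q ^ 3 + q) := by rw [← hC]; ring
        _ = _ := by rw [hB]; ring
    have e : b ^ ((q + 1) * A) = b ^ (2 * A * q * C) := by
      rw [pow_mul, ← h1, pow_mul b, ← h2, ← pow_mul, ← pow_mul]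
      congr 1; ring
    rw [hexp, pow_add] at e
    exact (mul_eq_left₀ (pow_ne_zero _ hb0)).mp e.symm
  have hc : (η * b2) ^ (2 * (A * B)) = 1 := by
    rw [← mul_assoc, pow_mul, h2, ← pow_mul, show 2 * A * q * B = 2 * (A * B) * q by ring,
      pow_mul, hb, one_pow]
  have hηone : η ^ (Fintype.card K / 2) = 1 := by
    rw [show Fintype.card K / 2 = 2 * (A * B) by omega]
    rwa [mul_pow, show b2 ^ (2 * (A * B)) = 1 by
      rw [show 2 * (A * B) = 2 * B * A by ring, pow_mul, hb2one, one_pow], mul_one] at hc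
  obtain ⟨z, hz⟩ := (FiniteField.isSquare_iff hchar hη0).mpr hηone
  exact hη ⟨z, by rw [hz, sq]⟩
end

section
/- Let q be an odd prime power, let η be a nonsquare in F_{q^8}, let b2 be a nonzero element of the subfield F_{q^4} of F_{q^8}, and let b1 ∈ F_{q^8} be nonzero. Then the element b1^{q^2+q}(η b2)^{q^6} + b1^{q^6+q^5}(η b2)^{q^2} lies in the subfield F_{q^4}, and there is no z ∈ F_{q^4} with z^2 = 4·b1^{q^6+q^5+q^2+q}·(η b2)^{q^4+1}. -/
/-!
Write `Q = q ^ 4`, so that `|K| = Q ^ 2` and `x ↦ x ^ Q` is the involution of `K` fixing `F_{q^4}`.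
It interchanges the two summands `b₁^{q²+q}(ηb₂)^{q⁶}` and `b₁^{q⁶+q⁵}(ηb₂)^{q²}`, so their sum is
fixed.

For the second claim put `y = b₁^{q²+q}·ηb₂`. The right-hand side is `4·y^{Q+1}`. If it is `z²` with
`z ∈ F_{q^4}`, raising to the power `(Q-1)/2` gives `1 = y^{(Q²-1)/2}`, so `y` is a square by Euler's
criterion. As `b₁^{q²+q}` is a square (`q² + q` is even) and so is `b₂`
(`b₂^{(Q²-1)/2} = (b₂^{Q-1})^{(Q+1)/2} = 1`), the element `η` would be a square.
-/

/-- For `q` odd, `η` a nonsquare in `F_{q^8}`, `b₂ ∈ F_{q^4}` nonzero and `b₁ ∈ F_{q^8}`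
nonzero: `b₁^{q²+q}(ηb₂)^{q⁶} + b₁^{q⁶+q⁵}(ηb₂)^{q²}` lies in `F_{q^4}`, and no `z ∈ F_{q^4}`
satisfies `z² = 4·b₁^{q⁶+q⁵+q²+q}·(ηb₂)^{q⁴+1}`. -/
theorem stmt_13 (p m q : ℕ) (hp : p.Prime) (hpodd : Odd p) (hm : 0 < m) (hq : q = p ^ m)
    (K : Type) [Field K] [Fintype K] (hK : Fintype.card K = q ^ 8)
    (η : K) (hη : ¬ ∃ z : K, z ^ 2 = η)
    (b2 : K) (hb2K : b2 ^ q ^ 4 = b2) (hb2 : b2 ≠ 0)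
    (b1 : K) (hb1 : b1 ≠ 0) :
    (b1 ^ (q ^ 2 + q) * (η * b2) ^ q ^ 6 + b1 ^ (q ^ 6 + q ^ 5) * (η * b2) ^ q ^ 2)
        ^ q ^ 4
      = b1 ^ (q ^ 2 + q) * (η * b2) ^ q ^ 6 + b1 ^ (q ^ 6 + q ^ 5) * (η * b2) ^ q ^ 2 ∧
    ¬ ∃ z : K, z ^ q ^ 4 = z ∧
      z ^ 2 = 4 * b1 ^ (q ^ 6 + q ^ 5 + q ^ 2 + q) * (η * b2) ^ (q ^ 4 + 1) := by
  subst hq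
  have : Fact p.Prime := ⟨hp⟩
  have : CharP K p := by
    obtain ⟨r, hr⟩ := CharP.exists K
    obtain ⟨n, hrp, hn⟩ := FiniteField.card K r
    have hdvd : r ∣ p := by
      have h1 : r ∣ (p ^ m) ^ 8 := by
        rw [← hK, hn]; exact dvd_pow_self r n.ne_zero
      exact hrp.dvd_of_dvd_pow (hrp.dvd_of_dvd_pow h1)
    rwa [← (Nat.prime_dvd_prime_iff_eq hrp hp).1 hdvd]
  have hadd : ∀ x y : K, (x + y) ^ (p ^ m) ^ 4 = x ^ (p ^ m) ^ 4 + y ^ (p ^ m) ^ 4 := by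
    intro x y
    rw [← pow_mul]
    exact add_pow_char_pow x y p (m * 4)
  have hqodd : Odd (p ^ m) := hpodd.pow
  generalize p ^ m = q at *
  have hfrob : ∀ x : K, x ^ q ^ 8 = x := fun x => by rw [← hK]; exact FiniteField.pow_card x
  constructor
  · rw [hadd, mul_pow (b1 ^ (q ^ 2 + q)), mul_pow (b1 ^ (q ^ 6 + q ^ 5))]
    have e1 : (b1 ^ (q ^ 2 + q)) ^ q ^ 4 = b1 ^ (q ^ 6 + q ^ 5) := by
      rw [← pow_mul]; congr 1; ring
    have e2 : ((η * b2) ^ q ^ 6) ^ q ^ 4 = (η * b2) ^ q ^ 2 := by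
      rw [← pow_mul, show q ^ 6 * q ^ 4 = q ^ 8 * q ^ 2 by ring, pow_mul, hfrob]
    have e3 : (b1 ^ (q ^ 6 + q ^ 5)) ^ q ^ 4 = b1 ^ (q ^ 2 + q) := by
      rw [← pow_mul, show (q ^ 6 + q ^ 5) * q ^ 4 = q ^ 8 * (q ^ 2 + q) by ring, pow_mul, hfrob]
    have e4 : ((η * b2) ^ q ^ 2) ^ q ^ 4 = (η * b2) ^ q ^ 6 := by
      rw [← pow_mul]; congr 1; ring
    rw [e1, e2, e3, e4, add_comm]
  · rintro ⟨z, hz, hz2⟩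
    have hη0 : η ≠ 0 := fun h => hη ⟨0, by simp [h]⟩
    have hchar : ringChar K ≠ 2 := by
      intro h
      have := FiniteField.even_card_of_char_two h
      rw [hK] at this
      exact Nat.not_even_iff_odd.2 (hqodd.pow (n := 8)) (Nat.even_iff.2 this)
    have h2 : (2 : K) ≠ 0 := Ring.two_ne_zero hchar
    have h2Q : (2 : K) ^ q ^ 4 = 2 := by
      rw [← one_add_one_eq_two, hadd, one_pow]
    obtain ⟨k, hk⟩ : ∃ k, q ^ 4 = 2 * k + 1 := hqodd.pow
    have hhalf : Fintype.card K / 2 = (q ^ 4 + 1) * k := by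
      have : Fintype.card K = 2 * ((q ^ 4 + 1) * k) + 1 := by
        rw [hK, show q ^ 8 = q ^ 4 * q ^ 4 by ring, hk]; ring
      omega
    have hfix : ∀ x : K, x ≠ 0 → x ^ q ^ 4 = x → (x ^ 2) ^ k = 1 := by
      intro x hx h
      rw [hk, pow_succ, pow_mul] at h
      exact mul_right_cancel₀ hx (by rw [h, one_mul])
    have hb2sq : IsSquare b2 := by
      rw [FiniteField.isSquare_iff hchar hb2, hhalf,
        show (q ^ 4 + 1) * k = 2 * k * (k + 1) by rw [hk]; ring, pow_mul, pow_mul,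
        hfix b2 hb2 hb2K, one_pow]
    have hcsq : IsSquare (b1 ^ (q ^ 2 + q)) := by
      have : Even (q ^ 2 + q) := hqodd.pow.add_odd hqodd
      exact this.isSquare_pow b1
    have hc0 : b1 ^ (q ^ 2 + q) ≠ 0 := pow_ne_zero _ hb1
    have hy0 : b1 ^ (q ^ 2 + q) * (η * b2) ≠ 0 := mul_ne_zero hc0 (mul_ne_zero hη0 hb2)
    have hzy : z ^ 2 = 2 ^ 2 * (b1 ^ (q ^ 2 + q) * (η * b2)) ^ (q ^ 4 + 1) := by
      rw [hz2, mul_pow (b1 ^ (q ^ 2 + q)), ← pow_mul,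
        show (q ^ 2 + q) * (q ^ 4 + 1) = q ^ 6 + q ^ 5 + q ^ 2 + q by ring]
      ring
    have hz0 : z ≠ 0 := by
      rintro rfl
      rw [zero_pow two_ne_zero] at hzy
      exact mul_ne_zero (pow_ne_zero 2 h2) (pow_ne_zero _ hy0) hzy.symm
    have hysq : IsSquare (b1 ^ (q ^ 2 + q) * (η * b2)) := by
      rw [FiniteField.isSquare_iff hchar hy0, hhalf]
      have h := congrArg (· ^ k) hzy
      rw [hfix z hz0 hz, mul_pow, hfix 2 h2 h2Q, one_mul, ← pow_mul] at h
      exact h.symm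
    have hηsq : IsSquare η := by
      have h := (hysq.div hcsq).div hb2sq
      rwa [mul_div_cancel_left₀ _ hc0, mul_div_cancel_right₀ _ hb2] at h
    obtain ⟨r, hr⟩ := hηsq
    exact hη ⟨r, by rw [hr, sq]⟩
end
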